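/- arXiv:1003.6123 — 4 statements merged into one kernel-verified Lean document; each statement's English description precedes it below -/
import Mathlib

section
/- Let w : ℕ → Bool be an aperiodic infinite binary word whose set of factors is closed under complementation. Then for every a n : ℕ there exists b : ℕ such that for all i, j < n, (a+i ≺_w a+j) if and only if (b+j ≺_w b+i); that is, the order-reverse of every subpermutation of length n of the infinite permutation π_w is again a subpermutation of π_w. -/
/-!
Since `w` is aperiodic, the finitely many comparisons between distinct positions `a + i`, `a + j`
with `i, j < n` are all decided within a common number `N` of letters. An occurrence, at some `b`,
of the complement of the factor of length `n + N` at `a` then shows every one of these comparisons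
with its two deciding letters swapped, so the order is reversed.
-/

/-- `PrecW w a b` : the shift of the word `w` at `a` is lexicographically smaller
(with `false < true`) than the shift at `b`. -/
def PrecW (w : ℕ → Bool) (a b : ℕ) : Prop :=
  ∃ c : ℕ, (∀ i < c, w (a + i) = w (b + i)) ∧ w (a + c) = false ∧ w (b + c) = true

/-- If the shifts at `x` and `y` differ within their first `N` letters, and the prefixes of length
`N` at `x'` and `y'` are the complements of those at `x` and `y`, then the comparison is reversed. -/
theorem PrecW.reverse {w : ℕ → Bool} {x y x' y' N : ℕ}
    (hx : ∀ k < N, w (x' + k) = !w (x + k)) (hy : ∀ k < N, w (y' + k) = !w (y + k))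
    (hd : ∃ k < N, w (x + k) ≠ w (y + k)) (h : PrecW w x y) : PrecW w y' x' := by
  obtain ⟨c, hc, h0, h1⟩ := h
  obtain ⟨k, hk, hne⟩ := hd
  have hcN : c < N := by
    by_contra hlt
    exact hne (hc k (by omega))
  refine ⟨c, fun i hi => ?_, ?_, ?_⟩
  · rw [hx i (by omega), hy i (by omega), hc i hi]
  · rw [hy c hcN, h1]; rfl
  · rw [hx c hcN, h0]; rfl

theorem PrecW.irrefl (w : ℕ → Bool) (x : ℕ) : ¬ PrecW w x x := by
  rintro ⟨c, -, h0, h1⟩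
  simp [h0] at h1

/-- For an aperiodic binary word whose factors are closed under complementation,
the order-reverse of every subpermutation of `π_w` is again a subpermutation. -/
theorem reverse_subperm_of_closed_under_complement (w : ℕ → Bool)
    (hap : ∀ a b : ℕ, a ≠ b → ∃ i : ℕ, w (a + i) ≠ w (b + i))
    (hcc : ∀ a n : ℕ, ∃ b : ℕ, ∀ i < n, w (b + i) = !w (a + i)) :
    ∀ a n : ℕ, ∃ b : ℕ, ∀ i < n, ∀ j < n,
      (PrecW w (a + i) (a + j) ↔ PrecW w (b + j) (b + i)) := by
  intro a n
  have hap' : ∀ p : ℕ × ℕ, ∃ k, p.1 ≠ p.2 → w (a + p.1 + k) ≠ w (a + p.2 + k) := by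
    intro p
    by_cases hp : p.1 = p.2
    · exact ⟨0, fun h => absurd hp h⟩
    · obtain ⟨k, hk⟩ := hap (a + p.1) (a + p.2) (by omega)
      exact ⟨k, fun _ => hk⟩
  choose f hf using hap'
  obtain ⟨N, hN⟩ : ∃ N, ∀ i < n, ∀ j < n, f (i, j) < N := by
    refine ⟨(Finset.range n ×ˢ Finset.range n).sup f + 1, fun i hi j hj => ?_⟩
    exact Nat.lt_succ_of_le (Finset.le_sup (f := f) (by simp [hi, hj]))
  obtain ⟨b, hb⟩ := hcc a (n + N)
  have hcomp : ∀ i < n, ∀ k < N, w (b + i + k) = !w (a + i + k) := by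
    intro i hi k hk
    rw [add_assoc, add_assoc]
    exact hb (i + k) (by omega)
  refine ⟨b, fun i hi j hj => ?_⟩
  by_cases hij : i = j
  · subst hij
    simp [PrecW.irrefl]
  have hne := hf (i, j) hij
  have hlt := hN i hi j hj
  refine ⟨PrecW.reverse (hcomp i hi) (hcomp j hj) ⟨_, hlt, hne⟩, ?_⟩
  -- Complementation is an involution, so the converse is the same lemma read from `b` to `a`.
  refine PrecW.reverse (N := N) (fun k hk => ?_) (fun k hk => ?_) ⟨_, hlt, ?_⟩
  · rw [hcomp j hj k hk, Bool.not_not]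
  · rw [hcomp i hi k hk, Bool.not_not]
  · rw [hcomp j hj _ hlt, hcomp i hi _ hlt]
    exact fun h => hne (Bool.not_inj h).symm
end

section
/- The Thue–Morse morphism is order preserving on shifts: for all a b : ℕ, a ≺ b if and only if 2a ≺ 2b. -/
/-!
The Thue-Morse word is the fixed point of the morphism `0 ↦ 01`, `1 ↦ 10`: the letter at `2 * n` is
the letter at `n` (`TM_two_mul`), and the letter at `2 * n + 1` is its complement
(`TM_two_mul_add_one`). Hence a first difference of the shifts at `a` and `b` in position `c` becomes
a first difference of the shifts at `2 * a` and `2 * b` in position `2 * c`, with the same two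
letters. Conversely, the first difference of the doubled shifts cannot occur at an odd position,
because the letters at `2 * n` and `2 * n + 1` determine each other.
-/

/-- The Thue-Morse word: parity of the binary digit sum. -/
def TM (n : ℕ) : ℕ := (Nat.digits 2 n).sum % 2

/-- `Prec a b` : the shift of the Thue-Morse word at `a` is lexicographically
smaller than the shift at `b`. -/
def Prec (a b : ℕ) : Prop :=
  ∃ c : ℕ, (∀ i < c, TM (a + i) = TM (b + i)) ∧ TM (a + c) < TM (b + c)

/-- The subpermutations of `π_T` of length `N` starting at `a` and `b` coincide. -/
def SamePerm (N a b : ℕ) : Prop :=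
  ∀ i < N, ∀ j < N, (Prec (a + i) (a + j) ↔ Prec (b + i) (b + j))

open scoped Classical in
/-- `P a N i` : the 0-indexed rank of position `a+i` within the subpermutation
`π_T[a, a+N-1]`. -/
noncomputable def P (a N i : ℕ) : ℕ :=
  ((Finset.range N).filter (fun j => Prec (a + j) (a + i))).card

/-- The subpermutations `π_T[a,a+N-1]` and `π_T[b,b+N-1]` have the same form. -/
def SameForm (N a b : ℕ) : Prop :=
  ∀ i < N - 1, (Prec (a + i) (a + (i + 1))) ↔ (Prec (b + i) (b + (i + 1)))

/-- The subpermutation `π_T[a,a+N-1]` is of type `k`. -/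
def TypeK (k N a : ℕ) : Prop :=
  1 ≤ k ∧ 2 * k ≤ N ∧
  ∃ ε : ℤ, (ε = 1 ∨ ε = -1) ∧
    ∀ i < k, (P a N i : ℤ) = P a N (N - k + i) + ε

/-- Positions `a` and `b` form a complementary pair of type `k` of length `N`. -/
def CompPair (k N a b : ℕ) : Prop :=
  1 ≤ k ∧ 2 * k ≤ N ∧
  ∃ ε : ℤ, (ε = 1 ∨ ε = -1) ∧
    (∀ i < k,
      (P a N i : ℤ) = P a N (N - k + i) + ε ∧
      (P b N i : ℤ) = P a N (N - k + i) ∧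
      (P b N (N - k + i) : ℤ) = P a N i) ∧
    (∀ j, k ≤ j → j < N - k → P b N j = P a N j)

/-- The permutation complexity of the Thue-Morse word: the number of distinct
subpermutations of `π_T` of length `N`. -/
noncomputable def tau (N : ℕ) : ℕ :=
  Set.ncard (Set.range (fun a : ℕ => fun i j : Fin N => Prec (a + i) (a + j)))

theorem TM_two_mul (n : ℕ) : TM (2 * n) = TM n := by
  rcases Nat.eq_zero_or_pos n with rfl | hn
  · rfl
  · simp [TM, Nat.digits_def' (b := 2) (n := 2 * n) (by norm_num) (by omega)]

theorem TM_two_mul_add_one (n : ℕ) : TM (2 * n + 1) = 1 - TM n := by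
  have hd : Nat.digits 2 (2 * n + 1) = 1 :: Nat.digits 2 n := by
    rw [Nat.digits_def' (by norm_num) (by omega)]
    congr 2 <;> omega
  simp only [TM, hd, List.sum_cons]
  omega

/-- The Thue-Morse morphism is order preserving on shifts. -/
theorem thueMorse_morphism_order_preserving (a b : ℕ) :
    Prec a b ↔ Prec (2 * a) (2 * b) := by
  constructor
  · rintro ⟨c, heq, hlt⟩
    refine ⟨2 * c, fun i hi => ?_, ?_⟩
    · rcases Nat.even_or_odd' i with ⟨k, rfl | rfl⟩
      · rw [← mul_add, ← mul_add, TM_two_mul, TM_two_mul]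
        exact heq k (by omega)
      · rw [← add_assoc, ← add_assoc, ← mul_add, ← mul_add, TM_two_mul_add_one,
          TM_two_mul_add_one, heq k (by omega)]
    · rwa [← mul_add, ← mul_add, TM_two_mul, TM_two_mul]
  · rintro ⟨c, heq, hlt⟩
    rcases Nat.even_or_odd' c with ⟨k, rfl | rfl⟩
    · refine ⟨k, fun i hi => ?_, ?_⟩
      · simpa only [← mul_add, TM_two_mul] using heq (2 * i) (by omega)
      · simpa only [← mul_add, TM_two_mul] using hlt
    · have h : TM (a + k) = TM (b + k) := by
        simpa only [← mul_add, TM_two_mul] using heq (2 * k) (by omega)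
      rw [← add_assoc, ← add_assoc, ← mul_add, ← mul_add, TM_two_mul_add_one,
        TM_two_mul_add_one, h] at hlt
      exact absurd hlt (lt_irrefl _)
end

section
/- If a b : ℕ satisfy T(a) = 0 and T(b) = 1 (so in particular a ≺ b), then (2b+1) ≺ 2a, 2a ≺ 2b, and 2b ≺ (2a+1); i.e., the shifts satisfy T[2b+1] < T[2a] < T[2b] < T[2a+1] lexicographically. -/
theorem TM_lt_two (n : ℕ) : TM n < 2 := Nat.mod_lt _ two_pos

/-- `T` contains no cube of a letter: two equal neighbours straddle two blocks `T (2m) T (2m+1)`,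
so the letter after them is the second one of its block and differs from its neighbour. -/
theorem TM_add_two_of_eq (n : ℕ) (h : TM (n + 1) = TM n) : TM (n + 2) = 1 - TM n := by
  obtain ⟨m, rfl | rfl⟩ := Nat.even_or_odd' n
  · rw [TM_two_mul_add_one, TM_two_mul] at h
    have := TM_lt_two m
    omega
  · rw [← h, show 2 * m + 1 + 2 = 2 * (m + 1) + 1 by ring, TM_two_mul_add_one,
      show 2 * m + 1 + 1 = 2 * (m + 1) by ring, TM_two_mul]

/-- If `T a = 0` and `T b = 1` then `T[2b+1] < T[2a] < T[2b] < T[2a+1]`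
lexicographically. -/
theorem image_of_zeros_and_ones (a b : ℕ) (ha : TM a = 0) (hb : TM b = 1) :
    Prec (2 * b + 1) (2 * a) ∧ Prec (2 * a) (2 * b) ∧ Prec (2 * b) (2 * a + 1) := by
  have hodd (n : ℕ) : TM (2 * n + 1) = 1 - TM n := TM_two_mul_add_one n
  have h2 (n : ℕ) : TM (2 * n + 2) = TM (n + 1) := TM_two_mul (n + 1)
  have h3 (n : ℕ) : TM (2 * n + 3) = 1 - TM (n + 1) := TM_two_mul_add_one (n + 1)
  have h4 (n : ℕ) : TM (2 * n + 4) = TM (n + 2) := TM_two_mul (n + 2)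
  have hA : TM (a + 1) = 0 ∨ TM (a + 1) = 1 := by have := TM_lt_two (a + 1); omega
  have hB : TM (b + 1) = 0 ∨ TM (b + 1) = 1 := by have := TM_lt_two (b + 1); omega
  have hA2 : TM (a + 1) = 0 → TM (a + 2) = 1 := fun h => by
    rw [TM_add_two_of_eq a (by rw [h, ha]), ha]
  have hB2 : TM (b + 1) = 1 → TM (b + 2) = 0 := fun h => by
    rw [TM_add_two_of_eq b (by rw [h, hb]), hb]
  refine ⟨?_, ⟨0, by simp, by simp [TM_two_mul, ha, hb]⟩, ?_⟩
  · rcases hB with hB | hB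
    · refine ⟨1, fun i hi => ?_, ?_⟩
      · interval_cases i
        simp [TM_two_mul, hodd, ha, hb]
      · simp [add_assoc, hodd, h2, ha, hB]
    · rcases hA with hA | hA
      · refine ⟨3, fun i hi => ?_, ?_⟩
        · interval_cases i <;> simp [add_assoc, TM_two_mul, hodd, h2, h3, ha, hb, hA, hB]
        · simp [add_assoc, h3, h4, hA, hB2 hB]
      · refine ⟨2, fun i hi => ?_, ?_⟩
        · interval_cases i <;> simp [add_assoc, TM_two_mul, hodd, h2, ha, hb, hB]
        · simp [add_assoc, h2, h3, hA, hB]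
  · rcases hA with hA | hA
    · rcases hB with hB | hB
      · refine ⟨2, fun i hi => ?_, ?_⟩
        · interval_cases i <;> simp [add_assoc, TM_two_mul, hodd, h2, ha, hb, hA]
        · simp [add_assoc, h2, h3, hA, hB]
      · refine ⟨3, fun i hi => ?_, ?_⟩
        · interval_cases i <;> simp [add_assoc, TM_two_mul, hodd, h2, h3, ha, hb, hA, hB]
        · simp [add_assoc, h3, h4, hB, hA2 hA]
    · refine ⟨1, fun i hi => ?_, ?_⟩
      · interval_cases i
        simp [TM_two_mul, hodd, ha, hb]
      · simp [add_assoc, hodd, h2, hb, hA]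
end

section
/- For every n ≥ 5 and all a b : ℕ, there exists i < n with T(2a+i) ≠ T(2b+1+i); i.e., no factor of the Thue–Morse word of length at least 5 occurring at an even position equals a factor of the same length occurring at an odd position. -/
/-- No letter occurs three times in a row: one of the two adjacent pairs starts at an even
position. -/
theorem TM_no_cube (a : ℕ) : ¬ (TM a = TM (a + 1) ∧ TM (a + 1) = TM (a + 2)) := by
  rintro ⟨h₁, h₂⟩
  obtain ⟨k, rfl | rfl⟩ := Nat.even_or_odd' a
  · rw [TM_two_mul, TM_two_mul_add_one] at h₁
    omega
  · rw [show 2 * k + 1 + 1 = 2 * (k + 1) by ring, show 2 * k + 1 + 2 = 2 * (k + 1) + 1 by ring,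
      TM_two_mul, TM_two_mul_add_one] at h₂
    omega

/-- No factor of the Thue-Morse word of length at least 5 occurring at an even
position equals a factor of the same length occurring at an odd position. -/
theorem even_odd_factors_differ (n : ℕ) (hn : 5 ≤ n) (a b : ℕ) :
    ∃ i < n, TM (2 * a + i) ≠ TM (2 * b + 1 + i) := by
  by_contra! h
  have h0 := h 0 (by omega)
  have h1 := h 1 (by omega)
  have h2 := h 2 (by omega)
  have h3 := h 3 (by omega)
  have h4 := h 4 (by omega)
  rw [show 2 * a + 0 = 2 * a by ring, show 2 * b + 1 + 0 = 2 * b + 1 by ring,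
    TM_two_mul, TM_two_mul_add_one] at h0
  rw [show 2 * b + 1 + 1 = 2 * (b + 1) by ring, TM_two_mul, TM_two_mul_add_one] at h1
  rw [show 2 * a + 2 = 2 * (a + 1) by ring, show 2 * b + 1 + 2 = 2 * (b + 1) + 1 by ring,
    TM_two_mul, TM_two_mul_add_one] at h2
  rw [show 2 * a + 3 = 2 * (a + 1) + 1 by ring, show 2 * b + 1 + 3 = 2 * (b + 2) by ring,
    TM_two_mul, TM_two_mul_add_one] at h3
  rw [show 2 * a + 4 = 2 * (a + 2) by ring, show 2 * b + 1 + 4 = 2 * (b + 2) + 1 by ring,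
    TM_two_mul, TM_two_mul_add_one] at h4
  have ha := TM_lt_two a
  have ha' := TM_lt_two (a + 1)
  exact TM_no_cube a ⟨by omega, by omega⟩
end
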